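/- Fix θ > 0. For all Schwartz functions f, g : ℝ^d × ℝ^d → ℂ, the function f ⋆_θ g is Lebesgue integrable on ℝ^d × ℝ^d and satisfies the tracial identity ∫_{ℝ^d × ℝ^d} (f ⋆_θ g)(x,w) dx dw = ∫_{ℝ^d × ℝ^d} f(x,w) g(x,w) dx dw. -/

import Mathlib

open MeasureTheory Complex Real

/-- The star product `(f ⋆_θ g)(x,w)` on `ℝ^d × ℝ^d`. -/
noncomputable def sprod (d : ℕ) (θ : ℝ) (f g : (Fin d → ℝ) × (Fin d → ℝ) → ℂ) :
    (Fin d → ℝ) × (Fin d → ℝ) → ℂ := fun z =>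
  (((Real.pi * θ) ^ (-(2 * d : ℤ)) : ℝ) : ℂ) *
    ∫ p : ((Fin d → ℝ) × (Fin d → ℝ)) × ((Fin d → ℝ) × (Fin d → ℝ)),
      f p.1 * g p.2 * Complex.exp (2 * Complex.I / (θ : ℂ) *
        ((∑ i, (p.2.1 i - z.1 i) * p.1.2 i + ∑ i, (z.1 i - p.1.1 i) * p.2.2 i +
          ∑ i, (p.1.1 i - p.2.1 i) * z.2 i : ℝ) : ℂ))

/-!
Write `Φ` for the symplectic Fourier transform with kernel `exp (-(2i/θ) ω(y, z))`. Integrating out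
the argument of `g` first turns `f ⋆_θ g` into `(πθ)^(-2d)` times the twisted convolution
`z ↦ ∫ y, exp ((2i/θ) ω(y, z)) f y (Φ g) (z - y)`, which is integrable because the phase has modulus
one and `Φ g` is integrable. Its phase is unchanged by `z ↦ z - y`, as `ω(y, y) = 0`, so integrating
over `z` first gives `∫ f · Φ (Φ g)`. Finally `Φ ∘ Φ = (πθ)^(2d)`, since `ω` is alternating.
-/

open scoped FourierTransform RealInnerProductSpace Matrix

namespace StarProduct

theorem integrable_fourierChar_smul {X F : Type*} [TopologicalSpace X] [MeasurableSpace X]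
    [OpensMeasurableSpace X] [NormedAddCommGroup F] [NormedSpace ℂ F] {μ : Measure X} {f : X → F}
    {φ : X → ℝ} (hφ : Continuous φ) (hf : Integrable f μ) :
    Integrable (fun x ↦ 𝐞 (φ x) • f x) μ := by
  have h_cont : Continuous fun x ↦ (𝐞 (φ x) : ℂ) :=
    continuous_subtype_val.comp (Real.continuous_fourierChar.comp hφ)
  exact hf.bdd_smul 1 h_cont.aestronglyMeasurable (.of_forall fun x ↦ (Circle.norm_coe _).le)

section TwistedConvolution

variable {V F : Type*} [AddCommGroup V] [Module ℝ V] [MeasurableSpace V]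
  [NormedAddCommGroup F] [NormedSpace ℂ F]

/-- The twisted convolution of `f` and `h`: the convolution `∫ y, f y • h (z - y)` weighted by the
phase `𝐞 (L y z) = exp (2πi L y z)`. -/
noncomputable def twistedConvolution (L : LinearMap.BilinForm ℝ V) (μ : Measure V)
    (f : V → ℂ) (h : V → F) (z : V) : F :=
  ∫ y, 𝐞 (L y z) • f y • h (z - y) ∂μ

variable [TopologicalSpace V] [IsTopologicalAddGroup V] [SecondCountableTopology V] [BorelSpace V]
  {L : LinearMap.BilinForm ℝ V} {μ : Measure V} [SFinite μ]

theorem integral_prod_eq_twistedConvolution (hL : Continuous fun p : V × V ↦ L p.1 p.2)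
    {f : V → ℂ} {g : V → F} (hf : Integrable f μ) (hg : Integrable g μ) (z : V) :
    ∫ p : V × V, 𝐞 (L p.1 z - L p.2 (z - p.1)) • f p.1 • g p.2 ∂μ.prod μ =
      twistedConvolution L μ f (VectorFourier.fourierIntegral 𝐞 μ L g) z := by
  have hφ : Continuous fun p : V × V ↦ L p.1 z - L p.2 (z - p.1) :=
    (hL.comp (continuous_fst.prodMk continuous_const)).sub
      (hL.comp (continuous_snd.prodMk (continuous_const.sub continuous_fst)))
  rw [integral_prod _ (integrable_fourierChar_smul hφ (hf.smul_prod hg))]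
  refine integral_congr_ae (.of_forall fun y ↦ ?_)
  simp only [VectorFourier.fourierIntegral, Circle.smul_def, ← integral_smul]
  refine integral_congr_ae (.of_forall fun x ↦ ?_)
  simp only [sub_eq_add_neg (L y z), AddChar.map_add_eq_mul, Circle.coe_mul, mul_smul,
    smul_comm (f y)]

variable [μ.IsAddRightInvariant]

theorem integrable_twistedConvolution_integrand (hL : Continuous fun p : V × V ↦ L p.1 p.2)
    {f : V → ℂ} {h : V → F} (hf : Integrable f μ) (hh : Integrable h μ) :
    Integrable (fun p : V × V ↦ 𝐞 (L p.2 p.1) • f p.2 • h (p.1 - p.2)) (μ.prod μ) :=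
  integrable_fourierChar_smul (hL.comp continuous_swap)
    (hf.convolution_integrand (ContinuousLinearMap.lsmul ℝ ℂ) hh)

theorem integrable_twistedConvolution (hL : Continuous fun p : V × V ↦ L p.1 p.2)
    {f : V → ℂ} {h : V → F} (hf : Integrable f μ) (hh : Integrable h μ) :
    Integrable (twistedConvolution L μ f h) μ :=
  (integrable_twistedConvolution_integrand hL hf hh).integral_prod_left

theorem integral_twistedConvolution (hL : Continuous fun p : V × V ↦ L p.1 p.2) (hL' : L.IsAlt)
    {f : V → ℂ} {h : V → F} (hf : Integrable f μ) (hh : Integrable h μ) :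
    ∫ z, twistedConvolution L μ f h z ∂μ =
      ∫ y, f y • VectorFourier.fourierIntegral 𝐞 μ L h y ∂μ := by
  have phase_sub (y z : V) : L y z = -L (z - y) y := by
    simp [hL'.self_eq_zero, LinearMap.BilinForm.IsAlt.neg_eq hL']
  calc ∫ z, twistedConvolution L μ f h z ∂μ
      = ∫ y, ∫ z, 𝐞 (L y z) • f y • h (z - y) ∂μ ∂μ :=
        integral_integral_swap (integrable_twistedConvolution_integrand hL hf hh)
    _ = ∫ y, ∫ z, f y • 𝐞 (-L (z - y) y) • h (z - y) ∂μ ∂μ := by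
        congr! 4 with y z
        rw [phase_sub, smul_comm]
    _ = ∫ y, f y • VectorFourier.fourierIntegral 𝐞 μ L h y ∂μ := by
        refine integral_congr_ae (.of_forall fun y ↦ ?_)
        simp only [integral_smul, VectorFourier.fourierIntegral]
        rw [integral_sub_right_eq_self (fun u ↦ 𝐞 (-L u y) • h u)]

end TwistedConvolution

section LinearChangeOfVariables

variable {E F : Type*} [NormedAddCommGroup E] [NormedSpace ℝ E] [FiniteDimensional ℝ E]
  [MeasurableSpace E] [BorelSpace E] {μ : Measure E} [μ.IsAddHaarMeasure]
  [NormedAddCommGroup F] {T : E →ₗ[ℝ] E}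

theorem measurableEmbedding_of_det_ne_zero (hT : LinearMap.det T ≠ 0) : MeasurableEmbedding T :=
  (T.equivOfDetNeZero hT).toContinuousLinearEquiv.toHomeomorph.measurableEmbedding

theorem integrable_comp_linearMap_iff (hT : LinearMap.det T ≠ 0) {f : E → F} :
    Integrable (fun x ↦ f (T x)) μ ↔ Integrable f μ := by
  rw [← integrable_smul_measure (f := f) (c := ENNReal.ofReal |(LinearMap.det T)⁻¹|)
    (by simpa using hT) ENNReal.ofReal_ne_top, ← Measure.map_linearMap_addHaar_eq_smul_addHaar μ hT]
  exact (measurableEmbedding_of_det_ne_zero hT).integrable_map_iff.symm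

theorem integral_comp_linearMap [NormedSpace ℝ F] (hT : LinearMap.det T ≠ 0) (f : E → F) :
    ∫ x, f (T x) ∂μ = |(LinearMap.det T)⁻¹| • ∫ x, f x ∂μ := by
  rw [← (measurableEmbedding_of_det_ne_zero hT).integral_map f,
    Measure.map_linearMap_addHaar_eq_smul_addHaar μ hT, integral_smul_measure,
    ENNReal.toReal_ofReal (abs_nonneg _)]

end LinearChangeOfVariables

section AlternatingFourier

variable {E V F : Type*} [NormedAddCommGroup E] [InnerProductSpace ℝ E] [FiniteDimensional ℝ E]
  [MeasurableSpace E] [BorelSpace E]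
  [AddCommGroup V] [Module ℝ V] [TopologicalSpace V] [MeasurableSpace V] [BorelSpace V]
  [NormedAddCommGroup F] [NormedSpace ℂ F]
  {μ : Measure V} {L : LinearMap.BilinForm ℝ V} {e : E ≃L[ℝ] V} {T : E →ₗ[ℝ] E}

theorem fourierIntegral_apply_eq_fourier (he : MeasurePreserving e volume μ)
    (hT : ∀ v w, L (e v) (e w) = ⟪v, T w⟫) (g : V → F) (w : E) :
    VectorFourier.fourierIntegral 𝐞 μ L g (e w) = 𝓕 (g ∘ e) (T w) := by
  rw [VectorFourier.fourierIntegral, ← he.integral_comp e.toHomeomorph.measurableEmbedding,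
    Real.fourier_eq]
  simp only [hT, Function.comp_apply]

theorem integrable_fourierIntegral_iff (he : MeasurePreserving e volume μ)
    (hT : ∀ v w, L (e v) (e w) = ⟪v, T w⟫) (hdet : LinearMap.det T ≠ 0) (g : V → F) :
    Integrable (VectorFourier.fourierIntegral 𝐞 μ L g) μ ↔ Integrable (𝓕 (g ∘ e)) := by
  rw [← he.integrable_comp_emb e.toHomeomorph.measurableEmbedding,
    ← integrable_comp_linearMap_iff (f := 𝓕 (g ∘ e)) hdet]
  simp only [Function.comp_def, fourierIntegral_apply_eq_fourier he hT]

/-- An alternating `T` is skew-adjoint, so the second transform is an inverse Fourier transform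
after the change of variables `T`. -/
theorem fourierIntegral_fourierIntegral_of_isAlt [CompleteSpace F]
    (he : MeasurePreserving e volume μ) (hT : ∀ v w, L (e v) (e w) = ⟪v, T w⟫)
    (hdet : LinearMap.det T ≠ 0) (hL : L.IsAlt) {g : V → F} (hg_cont : Continuous g)
    (hg : Integrable g μ) (hg' : Integrable (VectorFourier.fourierIntegral 𝐞 μ L g) μ) :
    VectorFourier.fourierIntegral 𝐞 μ L (VectorFourier.fourierIntegral 𝐞 μ L g) =
      |(LinearMap.det T)⁻¹| • g := by
  have he' := e.toHomeomorph.measurableEmbedding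
  have skew (v w : E) : -⟪v, T w⟫ = ⟪T v, w⟫ := by
    rw [← hT, LinearMap.BilinForm.IsAlt.neg_eq hL, hT, real_inner_comm]
  funext y
  obtain ⟨w, rfl⟩ := e.surjective y
  calc VectorFourier.fourierIntegral 𝐞 μ L (VectorFourier.fourierIntegral 𝐞 μ L g) (e w)
      = ∫ v, 𝐞 ⟪T v, w⟫ • 𝓕 (g ∘ e) (T v) := by
        rw [fourierIntegral_apply_eq_fourier he hT, Real.fourier_eq]
        simp only [skew, Function.comp_apply, fourierIntegral_apply_eq_fourier he hT]
    _ = |(LinearMap.det T)⁻¹| • 𝓕⁻ (𝓕 (g ∘ e)) w := by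
        rw [integral_comp_linearMap hdet (fun v ↦ 𝐞 ⟪v, w⟫ • 𝓕 (g ∘ e) v), Real.fourierInv_eq]
    _ = |(LinearMap.det T)⁻¹| • g (e w) := by
        rw [(hg_cont.comp e.continuous).fourierInv_fourier_eq
          ((he.integrable_comp_emb he').2 hg) ((integrable_fourierIntegral_iff he hT hdet g).1 hg'),
          Function.comp_apply]

end AlternatingFourier

section Symplectic

variable (ι : Type*) [Fintype ι]

instance : (volume : Measure ((ι → ℝ) × (ι → ℝ))).IsAddHaarMeasure :=
  Measure.prod.instIsAddHaarMeasure volume volume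

/-- The standard symplectic form `ω (x, w) (x', w') = ⟨x, w'⟩ - ⟨w, x'⟩` on phase space. -/
noncomputable def symplecticForm : LinearMap.BilinForm ℝ ((ι → ℝ) × (ι → ℝ)) :=
  LinearMap.mk₂ ℝ (fun a b ↦ a.1 ⬝ᵥ b.2 - a.2 ⬝ᵥ b.1)
    (fun a a' b ↦ by simp only [Prod.fst_add, Prod.snd_add, add_dotProduct]; ring)
    (fun c a b ↦ by simp [mul_sub])
    (fun a b b' ↦ by simp only [Prod.fst_add, Prod.snd_add, dotProduct_add]; ring)
    (fun c a b ↦ by simp [mul_sub])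

variable {ι}

theorem symplecticForm_apply (a b : (ι → ℝ) × (ι → ℝ)) :
    symplecticForm ι a b = a.1 ⬝ᵥ b.2 - a.2 ⬝ᵥ b.1 := rfl

theorem isAlt_smul_symplecticForm (c : ℝ) : (c • symplecticForm ι).IsAlt := fun a ↦ by
  simp [symplecticForm_apply, dotProduct_comm a.1]

theorem continuous_smul_symplecticForm (c : ℝ) :
    Continuous fun p : ((ι → ℝ) × (ι → ℝ)) × ((ι → ℝ) × (ι → ℝ)) ↦
      (c • symplecticForm ι) p.1 p.2 := by
  simp only [LinearMap.smul_apply, symplecticForm_apply, dotProduct]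
  fun_prop

variable (ι) in
/-- Phase space with its Euclidean structure: the standard Fourier theory of Mathlib lives on inner
product spaces, whereas `(ι → ℝ) × (ι → ℝ)` carries the sup norm. -/
noncomputable def euclideanEquiv : EuclideanSpace ℝ (ι ⊕ ι) ≃L[ℝ] (ι → ℝ) × (ι → ℝ) :=
  (EuclideanSpace.equiv (ι ⊕ ι) ℝ).trans (.sumPiEquivProdPi ℝ ι ι fun _ ↦ ℝ)

theorem measurePreserving_euclideanEquiv : MeasurePreserving (euclideanEquiv ι) :=
  (volume_measurePreserving_sumPiEquivProdPi fun _ : ι ⊕ ι ↦ ℝ).comp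
    (PiLp.volume_preserving_ofLp (ι ⊕ ι))

/-- The skew-adjoint operator representing `c • symplecticForm ι` in the Euclidean inner product,
through which inversion for the symplectic Fourier transform reduces to the standard one. The sign
comes from the convention `J = [[0, -1], [1, 0]]` of `Matrix.J`. -/
noncomputable def symplecticOperator [DecidableEq ι] (c : ℝ) :
    EuclideanSpace ℝ (ι ⊕ ι) →ₗ[ℝ] EuclideanSpace ℝ (ι ⊕ ι) :=
  -c • Matrix.toLpLin 2 2 (Matrix.J ι ℝ)

theorem smul_symplecticForm_euclideanEquiv [DecidableEq ι] (c : ℝ)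
    (v w : EuclideanSpace ℝ (ι ⊕ ι)) :
    (c • symplecticForm ι) (euclideanEquiv ι v) (euclideanEquiv ι w) =
      ⟪v, symplecticOperator c w⟫ := by
  obtain ⟨⟨x, p⟩, rfl⟩ := (euclideanEquiv ι).symm.surjective v
  obtain ⟨⟨y, q⟩, rfl⟩ := (euclideanEquiv ι).symm.surjective w
  have ofLp_symm (a b : ι → ℝ) : ((euclideanEquiv ι).symm (a, b)).ofLp = Sum.elim a b := rfl
  have inner_J : ⟪(euclideanEquiv ι).symm (x, p),
      Matrix.toLpLin 2 2 (Matrix.J ι ℝ) ((euclideanEquiv ι).symm (y, q))⟫ = p ⬝ᵥ y - x ⬝ᵥ q := by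
    simp [EuclideanSpace.inner_eq_star_dotProduct, ofLp_symm, Matrix.J, Matrix.fromBlocks_mulVec,
      Matrix.neg_mulVec, dotProduct_comm, neg_add_eq_sub]
  simp only [ContinuousLinearEquiv.apply_symm_apply, LinearMap.smul_apply, symplecticForm_apply,
    smul_eq_mul, symplecticOperator, neg_smul, LinearMap.neg_apply, inner_neg_right,
    inner_smul_right, inner_J]
  ring

theorem abs_det_symplecticOperator [DecidableEq ι] (c : ℝ) :
    |LinearMap.det (symplecticOperator (ι := ι) c)| = c ^ (2 * Fintype.card ι) := by
  have abs_det_J : |(Matrix.J ι ℝ).det| = 1 :=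
    (abs_eq zero_le_one).2 (mul_self_eq_one_iff.1 (Matrix.J_det_mul_J_det ι ℝ))
  rw [symplecticOperator, LinearMap.det_smul, Matrix.toLpLin_eq_toLin, LinearMap.det_toLin, abs_mul,
    abs_det_J, mul_one, finrank_euclideanSpace, Fintype.card_sum, ← two_mul, abs_pow, abs_neg,
    (even_two_mul _).pow_abs]

theorem det_symplecticOperator_ne_zero [DecidableEq ι] {c : ℝ} (hc : c ≠ 0) :
    LinearMap.det (symplecticOperator (ι := ι) c) ≠ 0 := by
  rw [← abs_ne_zero, abs_det_symplecticOperator]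
  exact pow_ne_zero _ hc

variable {F : Type*} [NormedAddCommGroup F] [NormedSpace ℂ F]

/-- The symplectic Fourier transform `z ↦ ∫ y, exp (-2πi c ω(y, z)) g y`, where `ω` is the
symplectic form. -/
noncomputable abbrev symplecticFourier (c : ℝ) (g : (ι → ℝ) × (ι → ℝ) → F) :
    (ι → ℝ) × (ι → ℝ) → F :=
  VectorFourier.fourierIntegral 𝐞 volume (c • symplecticForm ι) g

theorem symplecticFourier_symplecticFourier [CompleteSpace F] {c : ℝ} (hc : c ≠ 0)
    {g : (ι → ℝ) × (ι → ℝ) → F} (hg_cont : Continuous g) (hg : Integrable g)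
    (hg' : Integrable (symplecticFourier c g)) :
    symplecticFourier c (symplecticFourier c g) = (c ^ (2 * Fintype.card ι))⁻¹ • g := by
  classical
  rw [symplecticFourier, fourierIntegral_fourierIntegral_of_isAlt measurePreserving_euclideanEquiv
    (smul_symplecticForm_euclideanEquiv c) (det_symplecticOperator_ne_zero hc)
    (isAlt_smul_symplecticForm c) hg_cont hg hg', abs_inv, abs_det_symplecticOperator]

theorem integrable_symplecticFourier {c : ℝ} (hc : c ≠ 0)
    (g : SchwartzMap ((ι → ℝ) × (ι → ℝ)) F) : Integrable (symplecticFourier c g) := by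
  classical
  let gE := SchwartzMap.compCLMOfContinuousLinearEquiv ℂ (euclideanEquiv ι) g
  rw [integrable_fourierIntegral_iff measurePreserving_euclideanEquiv
    (smul_symplecticForm_euclideanEquiv c) (det_symplecticOperator_ne_zero hc)]
  exact SchwartzMap.fourier_coe gE ▸ (𝓕 gE).integrable

theorem sum_eq_symplecticForm_sub (a b z : (ι → ℝ) × (ι → ℝ)) :
    ∑ i, (b.1 i - z.1 i) * a.2 i + ∑ i, (z.1 i - a.1 i) * b.2 i + ∑ i, (a.1 i - b.1 i) * z.2 i =
      symplecticForm ι a z - symplecticForm ι b (z - a) := by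
  simp only [symplecticForm_apply, dotProduct, ← Finset.sum_add_distrib, ← Finset.sum_sub_distrib]
  refine Finset.sum_congr rfl fun i _ ↦ ?_
  simp only [Prod.fst_sub, Prod.snd_sub, Pi.sub_apply]
  ring

end Symplectic

theorem sprod_eq_smul_twistedConvolution {d : ℕ} (θ : ℝ) {f g : (Fin d → ℝ) × (Fin d → ℝ) → ℂ}
    (hf : Integrable f) (hg : Integrable g) :
    sprod d θ f g = (π * θ) ^ (-(2 * d : ℤ)) •
      twistedConvolution ((π * θ)⁻¹ • symplecticForm (Fin d)) volume f
        (symplecticFourier (π * θ)⁻¹ g) := by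
  have kernel_eq (s : ℝ) : cexp (2 * I / θ * s) = 𝐞 ((π * θ)⁻¹ * s) := by
    have hπ : (π : ℂ) ≠ 0 := ofReal_ne_zero.2 pi_ne_zero
    rw [Real.fourierChar_apply]
    congr 1
    push_cast
    field_simp
  funext z
  rw [Pi.smul_apply, ← integral_prod_eq_twistedConvolution (continuous_smul_symplecticForm _) hf hg,
    Complex.real_smul, sprod]
  simp only [sum_eq_symplecticForm_sub, kernel_eq, LinearMap.smul_apply, smul_eq_mul, ← mul_sub,
    Circle.smul_def, mul_comm (𝐞 _ : ℂ)]
  rfl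

end StarProduct

open StarProduct

theorem star_tracial_general {d : ℕ} {θ : ℝ} (hθ : θ ≠ 0)
    {f g : (Fin d → ℝ) × (Fin d → ℝ) → ℂ} (hf : Integrable f) (hg_cont : Continuous g)
    (hg : Integrable g) (hg' : Integrable (symplecticFourier (π * θ)⁻¹ g)) :
    Integrable (sprod d θ f g) ∧ ∫ z, sprod d θ f g z = ∫ z, f z * g z := by
  have hπθ : π * θ ≠ 0 := mul_ne_zero pi_ne_zero hθ
  have hL := continuous_smul_symplecticForm (ι := Fin d) (π * θ)⁻¹
  have normalization :
      (π * θ) ^ (-(2 * d : ℤ)) * ((π * θ)⁻¹ ^ (2 * Fintype.card (Fin d)))⁻¹ = 1 := by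
    rw [Fintype.card_fin, inv_pow, inv_inv, zpow_neg]
    exact inv_mul_cancel₀ (pow_ne_zero (2 * d) hπθ)
  rw [sprod_eq_smul_twistedConvolution θ hf hg]
  refine ⟨(integrable_twistedConvolution hL hf hg').smul _, ?_⟩
  simp only [Pi.smul_apply]
  rw [integral_smul, integral_twistedConvolution hL (isAlt_smul_symplecticForm _) hf hg',
    ← symplecticFourier, symplecticFourier_symplecticFourier (inv_ne_zero hπθ) hg_cont hg hg']
  simp only [Pi.smul_apply, smul_comm (f _)]
  rw [integral_smul, smul_smul, normalization, one_smul]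
  rfl

theorem star_tracial (d : ℕ) (θ : ℝ) (hθ : 0 < θ)
    (f g : SchwartzMap ((Fin d → ℝ) × (Fin d → ℝ)) ℂ) :
    Integrable (sprod d θ f g) (volume : Measure ((Fin d → ℝ) × (Fin d → ℝ))) ∧
    ∫ z : (Fin d → ℝ) × (Fin d → ℝ), sprod d θ f g z =
      ∫ z : (Fin d → ℝ) × (Fin d → ℝ), f z * g z := by
  exact star_tracial_general hθ.ne' f.integrable g.continuous g.integrable
    (integrable_symplecticFourier (inv_ne_zero (mul_ne_zero pi_ne_zero hθ.ne')) g)
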